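/- For every p ∈ (0,1/2] and every ε > 0 there exists a constant c > 0 (depending only on p and ε) such that for every n ≥ 1 and every linear code 𝒞 ⊆ 𝔽₂ⁿ, Δ(u, f_ber,p^𝒞) ≤ Σ_r Δ(u, f_unif,r^𝒞) + 2^{−cn}, where the sum ranges over all integers r with (1−ε)np ≤ r ≤ (1+ε)np. -/

import Mathlib

open scoped BigOperators
open scoped Classical

attribute [local instance] Fintype.ofFinite

/-- Statistical distance between two functions on a finite set. -/
noncomputable def statDist {S : Type*} [Fintype S] (f g : S → ℝ) : ℝ :=
  (1 / 2) * ∑ x : S, |f x - g x|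

/-- `f^𝒞`, the periodization of `f` over the code `𝒞`. -/
noncomputable def periodize {n : ℕ} (C : Submodule (ZMod 2) (Fin n → ZMod 2))
    (f : (Fin n → ZMod 2) → ℝ) : ((Fin n → ZMod 2) ⧸ C) → ℝ :=
  fun xbar => ∑ y : Fin n → ZMod 2,
    if (Submodule.Quotient.mk y : (Fin n → ZMod 2) ⧸ C) = xbar then f y else 0

/-- The uniform distribution on the quotient `𝔽₂ⁿ/𝒞`. -/
noncomputable def unifQuot {n : ℕ} (C : Submodule (ZMod 2) (Fin n → ZMod 2)) :
    ((Fin n → ZMod 2) ⧸ C) → ℝ :=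
  fun _ => (Nat.card ((Fin n → ZMod 2) ⧸ C) : ℝ)⁻¹

/-- The Bernoulli distribution of parameter `p` on `𝔽₂ⁿ`. -/
noncomputable def fber (n : ℕ) (p : ℝ) : (Fin n → ZMod 2) → ℝ :=
  fun x => p ^ (hammingNorm x) * (1 - p) ^ (n - hammingNorm x)

/-- The uniform distribution on the Hamming sphere of radius `w` in `𝔽₂ⁿ`. -/
noncomputable def funif (n w : ℕ) : (Fin n → ZMod 2) → ℝ :=
  fun x => if hammingNorm x = w then ((n.choose w : ℝ))⁻¹ else 0

/-!
`f_ber,p` is the mixture of the `f_unif,r` with binomial weights, so by convexity of `Δ(u, ·)` the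
distance of its periodization to `u` is at most the sum over the window plus the binomial mass
outside the window, which Hoeffding's inequality bounds by `2 exp (-2 (εp)² n)`. For small `n` that
bound exceeds `1`, which no choice of `c` can repair; there one uses instead that `f_ber,p` is at
least `q ^ n` everywhere, `q = min p (1 - p)`, so that its distance to `u` is at most `1 - q ^ n`.
-/

section StatDist

variable {S : Type*} [Fintype S]

theorem statDist_nonneg (f g : S → ℝ) : 0 ≤ statDist f g := by
  unfold statDist
  positivity

theorem statDist_eq_one_sub_sum_min {f g : S → ℝ} (hf : ∑ x, f x = 1) (hg : ∑ x, g x = 1) :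
    statDist f g = 1 - ∑ x, min (f x) (g x) := by
  have habs (x : S) : |f x - g x| = f x + g x - 2 * min (f x) (g x) := by
    rw [← max_sub_min_eq_abs', ← min_add_max (f x) (g x)]
    ring
  simp only [statDist, habs, Finset.sum_sub_distrib, Finset.sum_add_distrib, ← Finset.mul_sum,
    hf, hg]
  ring

theorem convexOn_statDist_right (f : S → ℝ) : ConvexOn ℝ Set.univ (statDist f) := by
  refine ⟨convex_univ, fun g _ h _ a b ha hb hab => ?_⟩
  have hpoint (x : S) : |f x - (a * g x + b * h x)| ≤ a * |f x - g x| + b * |f x - h x| :=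
    calc |f x - (a * g x + b * h x)|
        = |a * (f x - g x) + b * (f x - h x)| := by
          congr 1
          linear_combination -f x * hab
      _ ≤ |a * (f x - g x)| + |b * (f x - h x)| := abs_add_le _ _
      _ = a * |f x - g x| + b * |f x - h x| := by
          rw [abs_mul, abs_mul, abs_of_nonneg ha, abs_of_nonneg hb]
  calc statDist f (a • g + b • h)
      ≤ 1 / 2 * ∑ x, (a * |f x - g x| + b * |f x - h x|) := by
        unfold statDist
        gcongr with x
        exact hpoint x
    _ = a • statDist f g + b • statDist f h := by
        simp only [statDist, Finset.sum_add_distrib, ← Finset.mul_sum, smul_eq_mul]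
        ring

theorem statDist_sum_smul_le_sum_add_sum_sdiff {ι : Type*} [DecidableEq ι] {s : Finset ι}
    {w : ι → ℝ} (hw : ∀ i ∈ s, 0 ≤ w i) (hw1 : ∑ i ∈ s, w i = 1) {f : S → ℝ} {g : ι → S → ℝ}
    (hg : ∀ i ∈ s, statDist f (g i) ≤ 1) (J : Finset ι) :
    statDist f (∑ i ∈ s, w i • g i) ≤ ∑ i ∈ J, statDist f (g i) + ∑ i ∈ s \ J, w i := by
  have hw_le (i : ι) (hi : i ∈ s) : w i ≤ 1 := hw1 ▸ Finset.single_le_sum hw hi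
  calc statDist f (∑ i ∈ s, w i • g i)
      ≤ ∑ i ∈ s, w i * statDist f (g i) :=
        (convexOn_statDist_right f).map_sum_le hw hw1 fun _ _ => Set.mem_univ _
    _ = ∑ i ∈ s ∩ J, w i * statDist f (g i) + ∑ i ∈ s \ J, w i * statDist f (g i) :=
        (Finset.sum_inter_add_sum_sdiff _ _ _).symm
    _ ≤ ∑ i ∈ s ∩ J, statDist f (g i) + ∑ i ∈ s \ J, w i := by
        gcongr with i hi i hi
        · exact mul_le_of_le_one_left (statDist_nonneg _ _) (hw_le i (Finset.mem_inter.1 hi).1)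
        · have his := (Finset.mem_sdiff.1 hi).1
          exact mul_le_of_le_one_right (hw i his) (hg i his)
    _ ≤ ∑ i ∈ J, statDist f (g i) + ∑ i ∈ s \ J, w i := by
        gcongr
        · exact fun _ _ _ => statDist_nonneg _ _
        · exact Finset.inter_subset_right

end StatDist

section Periodize

variable {n : ℕ} (C : Submodule (ZMod 2) (Fin n → ZMod 2))

theorem sum_periodize (f : (Fin n → ZMod 2) → ℝ) : ∑ x, periodize C f x = ∑ y, f y := by
  simp only [periodize]
  rw [Finset.sum_comm]
  simp only [Finset.sum_ite_eq, Finset.mem_univ, if_true]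

theorem periodize_sum_smul {ι : Type*} (s : Finset ι) (w : ι → ℝ)
    (f : ι → (Fin n → ZMod 2) → ℝ) :
    periodize C (∑ i ∈ s, w i • f i) = ∑ i ∈ s, w i • periodize C (f i) := by
  ext x
  simp only [periodize, Finset.sum_apply, Pi.smul_apply, smul_eq_mul, Finset.mul_sum, mul_ite,
    mul_zero]
  rw [Finset.sum_comm]
  simp only [Finset.sum_ite_irrel, Finset.sum_const_zero]

theorem le_periodize_mk {f : (Fin n → ZMod 2) → ℝ} (hf : ∀ y, 0 ≤ f y) (y : Fin n → ZMod 2) :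
    f y ≤ periodize C f (Submodule.Quotient.mk y) := by
  simp only [periodize, ← Finset.sum_filter]
  exact Finset.single_le_sum (fun z _ => hf z)
    (Finset.mem_filter.2 ⟨Finset.mem_univ y, rfl⟩)

theorem unifQuot_nonneg (x : (Fin n → ZMod 2) ⧸ C) : 0 ≤ unifQuot C x := by
  unfold unifQuot
  positivity

theorem sum_unifQuot : ∑ x, unifQuot C x = 1 := by
  have hcard : (Nat.card ((Fin n → ZMod 2) ⧸ C) : ℝ) ≠ 0 := mod_cast Nat.card_pos.ne'
  simp only [unifQuot, Finset.sum_const, Finset.card_univ, nsmul_eq_mul]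
  rw [← Nat.card_eq_fintype_card, mul_inv_cancel₀ hcard]

theorem unifQuot_le_one (x : (Fin n → ZMod 2) ⧸ C) : unifQuot C x ≤ 1 :=
  sum_unifQuot C ▸ Finset.single_le_sum (fun x _ => unifQuot_nonneg C x) (Finset.mem_univ x)

theorem statDist_unifQuot_periodize_le_one_sub {f : (Fin n → ZMod 2) → ℝ}
    (hf : ∑ y, f y = 1) {m : ℝ} (hm : 0 ≤ m) (hmf : ∀ y, m ≤ f y) :
    statDist (unifQuot C) (periodize C f) ≤ 1 - m := by
  have hf0 (y : Fin n → ZMod 2) : 0 ≤ f y := hm.trans (hmf y)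
  have hm1 : m ≤ 1 :=
    (hmf 0).trans (hf ▸ Finset.single_le_sum (fun y _ => hf0 y) (Finset.mem_univ 0))
  have hmin (x : (Fin n → ZMod 2) ⧸ C) :
      m * unifQuot C x ≤ min (unifQuot C x) (periodize C f x) := by
    refine le_min (mul_le_of_le_one_left (unifQuot_nonneg C x) hm1) ?_
    obtain ⟨y, rfl⟩ := Submodule.Quotient.mk_surjective C x
    exact (mul_le_of_le_one_right hm (unifQuot_le_one C _)).trans
      ((hmf y).trans (le_periodize_mk C hf0 y))
  have hsum := Finset.sum_le_sum fun x (_ : x ∈ Finset.univ) => hmin x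
  rw [← Finset.mul_sum, sum_unifQuot, mul_one] at hsum
  rw [statDist_eq_one_sub_sum_min (sum_unifQuot C) ((sum_periodize C f).trans hf)]
  exact sub_le_sub_left hsum 1

end Periodize

theorem card_hammingNorm_eq (ι : Type*) [Fintype ι] [DecidableEq ι] (r : ℕ) :
    (Finset.univ.filter fun x : ι → ZMod 2 => hammingNorm x = r).card =
      (Fintype.card ι).choose r := by
  have hbit (a b : ZMod 2) (h : a ≠ 0 ↔ b ≠ 0) : a = b := by
    decide +revert
  rw [← Finset.card_univ, ← Finset.card_powersetCard]
  refine Finset.card_nbij (fun x => Finset.univ.filter fun i => x i ≠ 0) ?_ ?_ ?_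
  · intro x hx
    simpa [Finset.mem_powersetCard, hammingNorm] using hx
  · intro x _ y _ hxy
    funext i
    exact hbit _ _ (by simpa using congrArg (i ∈ ·) hxy)
  · intro s hs
    have hsupp : (Finset.univ.filter fun i => (if i ∈ s then (1 : ZMod 2) else 0) ≠ 0) = s := by
      ext i
      simp
    refine ⟨fun i => if i ∈ s then 1 else 0, ?_, hsupp⟩
    simpa [hammingNorm, hsupp] using hs

theorem hammingNorm_fin_le {n : ℕ} (x : Fin n → ZMod 2) : hammingNorm x ≤ n := by
  simpa using hammingNorm_le_card_fintype (x := x)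

theorem funif_nonneg (n r : ℕ) (x : Fin n → ZMod 2) : 0 ≤ funif n r x := by
  unfold funif
  positivity

theorem sum_funif {n r : ℕ} (hr : r ≤ n) : ∑ x, funif n r x = 1 := by
  have hchoose : (n.choose r : ℝ) ≠ 0 := mod_cast (Nat.choose_pos hr).ne'
  simp only [funif]
  rw [← Finset.sum_filter, Finset.sum_const, nsmul_eq_mul, card_hammingNorm_eq, Fintype.card_fin,
    mul_inv_cancel₀ hchoose]

section Binomial

open MeasureTheory ProbabilityTheory
open scoped unitInterval

theorem measureReal_abs_ge_le_of_hasSubgaussianMGF {Ω : Type*} {mΩ : MeasurableSpace Ω}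
    {μ : Measure Ω} [IsFiniteMeasure μ] {X : Ω → ℝ} {c : NNReal} (h : HasSubgaussianMGF X c μ)
    {δ : ℝ} (hδ : 0 ≤ δ) :
    μ.real {ω | δ ≤ |X ω|} ≤ 2 * Real.exp (-δ ^ 2 / (2 * c)) := by
  have hunion : {ω | δ ≤ |X ω|} = {ω | δ ≤ X ω} ∪ {ω | δ ≤ (-X) ω} := by
    ext ω
    exact le_abs (b := X ω)
  calc μ.real {ω | δ ≤ |X ω|}
      ≤ μ.real {ω | δ ≤ X ω} + μ.real {ω | δ ≤ (-X) ω} := hunion ▸ measureReal_union_le _ _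
    _ ≤ Real.exp (-δ ^ 2 / (2 * c)) + Real.exp (-δ ^ 2 / (2 * c)) :=
        add_le_add (h.measure_ge_le hδ) (h.neg.measure_ge_le hδ)
    _ = 2 * Real.exp (-δ ^ 2 / (2 * c)) := (two_mul _).symm

theorem sum_Iic_binomial_real_singleton (n : ℕ) (p : I) :
    ∑ k ∈ Finset.Iic n, Bin(n, p).real {k} = 1 := by
  have h := integral_binomial (n := n) (p := p) fun _ => (1 : ℝ)
  simpa [binomial_real_singleton] using h.symm

theorem mgf_sub_binomial (n : ℕ) (p : I) (t : ℝ) :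
    mgf (fun k : ℕ => (k : ℝ) - n * p) Bin(n, p) t =
      mgf (fun x : ℝ => x - p) Ber(1, 0, p) t ^ n := by
  have hker (k : ℕ) (hk : k ≤ n) : Real.exp (t * (k - n * p)) =
      Real.exp (t * (1 - p)) ^ k * Real.exp (t * (0 - p)) ^ (n - k) := by
    rw [← Real.exp_nat_mul, ← Real.exp_nat_mul, ← Real.exp_add, Nat.cast_sub hk]
    ring_nf
  rw [mgf, integral_binomial, mgf, integral_bernoulliMeasure, add_pow, ← Nat.range_succ_eq_Iic]
  refine Finset.sum_congr rfl fun k hk => ?_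
  rw [hker k (Finset.mem_range_succ_iff.1 hk)]
  simp only [smul_eq_mul, mul_pow]
  ring

theorem hasSubgaussianMGF_sub_bernoulliMeasure (p : I) :
    HasSubgaussianMGF (fun x : ℝ => x - p) (1 / 4) Ber(1, 0, p) := by
  have hmem : ∀ᵐ x ∂Ber((1 : ℝ), 0, p), id x ∈ Set.Icc (0 : ℝ) 1 := by
    rw [ae_iff]
    exact bernoulliMeasure_apply_of_notMem_of_notMem p measurableSet_Icc.compl
      (by simp) (by simp)
  have h := hasSubgaussianMGF_of_mem_Icc aemeasurable_id hmem
  have hc : (‖(1 : ℝ) - 0‖₊ / 2) ^ 2 = 1 / 4 := by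
    rw [sub_zero, nnnorm_one, div_pow, one_pow]
    norm_num
  rw [hc] at h
  simpa [integral_bernoulliMeasure] using h

theorem hasSubgaussianMGF_sub_binomial (n : ℕ) (p : I) :
    HasSubgaussianMGF (fun k : ℕ => (k : ℝ) - n * p) (n / 4) Bin(n, p) where
  integrable_exp_mul _ := integrable_binomial _
  mgf_le t := by
    rw [mgf_sub_binomial]
    calc mgf (fun x : ℝ => x - p) Ber(1, 0, p) t ^ n
        ≤ Real.exp (((1 / 4 : NNReal) : ℝ) * t ^ 2 / 2) ^ n :=
          pow_le_pow_left₀ mgf_nonneg ((hasSubgaussianMGF_sub_bernoulliMeasure p).mgf_le t) n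
      _ = Real.exp (((n / 4 : NNReal) : ℝ) * t ^ 2 / 2) := by
          rw [← Real.exp_nat_mul]
          push_cast
          ring_nf

theorem binomial_real_abs_sub_ge_le (n : ℕ) (p : I) {t : ℝ} (ht : 0 ≤ t) :
    Bin(n, p).real {k | n * t ≤ |(k : ℝ) - n * p|} ≤ 2 * Real.exp (-(2 * t ^ 2 * n)) := by
  have h := measureReal_abs_ge_le_of_hasSubgaussianMGF (hasSubgaussianMGF_sub_binomial n p)
    (mul_nonneg n.cast_nonneg ht)
  convert h using 3
  push_cast
  rcases eq_or_ne (n : ℝ) 0 with hn | hn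
  · simp [hn]
  · field_simp
    ring

theorem mul_le_abs_sub_of_notMem_Icc_ceil_floor {x ε : ℝ} (h : 0 ≤ (1 + ε) * x) {k : ℕ}
    (hk : k ∉ Finset.Icc ⌈(1 - ε) * x⌉₊ ⌊(1 + ε) * x⌋₊) : ε * x ≤ |(k : ℝ) - x| := by
  rw [Finset.mem_Icc, not_and_or, not_le, not_le, Nat.lt_ceil, Nat.floor_lt h] at hk
  rw [le_abs]
  rcases hk with hk | hk
  · right
    linarith
  · left
    linarith

theorem sum_binomial_real_sdiff_Icc_ceil_floor_le (n : ℕ) (p : I) {ε : ℝ} (hε : 0 ≤ ε) :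
    ∑ k ∈ Finset.Iic n \ Finset.Icc ⌈(1 - ε) * n * p⌉₊ ⌊(1 + ε) * n * p⌋₊, Bin(n, p).real {k} ≤
      2 * Real.exp (-(2 * (ε * p) ^ 2 * n)) := by
  have hp : (0 : ℝ) ≤ p := p.2.1
  rw [sum_measureReal_singleton]
  refine (measureReal_mono fun k hk => ?_).trans
    (binomial_real_abs_sub_ge_le n p (mul_nonneg hε hp))
  rw [Finset.mem_coe, Finset.mem_sdiff, mul_assoc, mul_assoc] at hk
  rw [Set.mem_ofPred_eq, mul_left_comm]
  exact mul_le_abs_sub_of_notMem_Icc_ceil_floor (by positivity) hk.2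

end Binomial

section Bernoulli

open MeasureTheory ProbabilityTheory
open scoped unitInterval

theorem fber_eq_sum_smul_funif (n : ℕ) (p : I) :
    fber n p = ∑ r ∈ Finset.Iic n, Bin(n, p).real {r} • funif n r := by
  ext x
  have hx := hammingNorm_fin_le x
  have hchoose : (n.choose (hammingNorm x) : ℝ) ≠ 0 := mod_cast (Nat.choose_pos hx).ne'
  simp only [Finset.sum_apply, Pi.smul_apply, smul_eq_mul, funif, mul_ite, mul_zero]
  rw [Finset.sum_ite_eq, if_pos (Finset.mem_Iic.2 hx), binomial_real_singleton, fber]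
  field_simp

theorem sum_fber (n : ℕ) (p : I) : ∑ x, fber n p x = 1 := by
  simp only [fber_eq_sum_smul_funif, Finset.sum_apply, Pi.smul_apply, smul_eq_mul]
  rw [Finset.sum_comm, ← sum_Iic_binomial_real_singleton n p]
  refine Finset.sum_congr rfl fun r hr => ?_
  rw [← Finset.mul_sum, sum_funif (Finset.mem_Iic.1 hr), mul_one]

theorem min_pow_le_fber {n : ℕ} (p : I) (x : Fin n → ZMod 2) :
    min (p : ℝ) (1 - p) ^ n ≤ fber n p x := by
  have hq : 0 ≤ min (p : ℝ) (1 - p) := le_min p.2.1 (sub_nonneg.2 p.2.2)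
  calc min (p : ℝ) (1 - p) ^ n
      = min (p : ℝ) (1 - p) ^ hammingNorm x * min (p : ℝ) (1 - p) ^ (n - hammingNorm x) := by
        rw [← pow_add, Nat.add_sub_cancel' (hammingNorm_fin_le x)]
    _ ≤ fber n p x := by
        unfold fber
        gcongr
        · exact pow_nonneg p.2.1 _
        · exact min_le_left _ _
        · exact min_le_right _ _

variable {n : ℕ} (C : Submodule (ZMod 2) (Fin n → ZMod 2)) (p : I)

theorem statDist_fber_le_one_sub_min_pow :
    statDist (unifQuot C) (periodize C (fber n p)) ≤ 1 - min (p : ℝ) (1 - p) ^ n :=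
  statDist_unifQuot_periodize_le_one_sub C (sum_fber n p)
    (pow_nonneg (le_min p.2.1 (sub_nonneg.2 p.2.2)) n) (min_pow_le_fber p)

theorem statDist_fber_le_sum_add_sum_sdiff (J : Finset ℕ) :
    statDist (unifQuot C) (periodize C (fber n p)) ≤
      ∑ r ∈ J, statDist (unifQuot C) (periodize C (funif n r)) +
        ∑ r ∈ Finset.Iic n \ J, Bin(n, p).real {r} := by
  rw [fber_eq_sum_smul_funif, periodize_sum_smul]
  refine statDist_sum_smul_le_sum_add_sum_sdiff (fun _ _ => measureReal_nonneg)
    (sum_Iic_binomial_real_singleton n p) (fun r hr => ?_) J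
  simpa using statDist_unifQuot_periodize_le_one_sub C (sum_funif (Finset.mem_Iic.1 hr)) le_rfl
    (funif_nonneg n r)

end Bernoulli

theorem exists_min_exp_one_sub_pow_le_two_rpow {a q : ℝ} (ha : 0 < a) (hq0 : 0 < q)
    (hq1 : q ≤ 1) :
    ∃ c : ℝ, 0 < c ∧ ∀ n : ℕ,
      min (2 * Real.exp (-(a * n))) (1 - q ^ n) ≤ (2 : ℝ) ^ (-(c * n)) := by
  have hlog : 0 < Real.log 2 := Real.log_pos one_lt_two
  obtain ⟨N, hN⟩ := exists_nat_gt (2 * Real.log 2 / a)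
  have hN0 : (0 : ℝ) < N := lt_trans (by positivity) hN
  rw [div_lt_iff₀ ha] at hN
  -- `b ≤ a / 2` absorbs the factor `2` for `n ≥ N`, where `2 ≤ exp (a * n / 2)`;
  -- `b ≤ q ^ N / N` makes `1 - q ^ n ≤ 1 - b * n ≤ exp (-b * n)` for `n ≤ N`.
  set b : ℝ := min (a / 2) (q ^ N / N)
  have hb : 0 < b := lt_min (by positivity) (by positivity)
  have hrpow (n : ℕ) : (2 : ℝ) ^ (-(b / Real.log 2 * n)) = Real.exp (-(b * n)) := by
    rw [Real.rpow_def_of_pos two_pos]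
    congr 1
    field_simp
  refine ⟨b / Real.log 2, div_pos hb hlog, fun n => ?_⟩
  rw [hrpow]
  rcases le_total N n with hn | hn
  · have hNn : (N : ℝ) ≤ n := mod_cast hn
    have hba : b ≤ a / 2 := min_le_left _ _
    refine min_le_of_left_le ?_
    calc 2 * Real.exp (-(a * n)) = Real.exp (Real.log 2 + -(a * n)) := by
          rw [Real.exp_add, Real.exp_log two_pos]
      _ ≤ Real.exp (-(b * n)) := by
          gcongr
          nlinarith
  · have hbn : b * n ≤ q ^ n :=
      calc b * n ≤ q ^ N / N * N := by
            gcongr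
            exact min_le_right _ _
        _ = q ^ N := div_mul_cancel₀ _ hN0.ne'
        _ ≤ q ^ n := pow_le_pow_of_le_one hq0.le hq1 hn
    refine min_le_of_right_le ?_
    linarith [Real.one_sub_le_exp_neg (b * n)]

theorem bernoulli_vs_unif_smoothing_general {p : ℝ} (hp : p ∈ Set.Ioo (0 : ℝ) 1)
    {ε : ℝ} (hε : 0 < ε) :
    ∃ c : ℝ, 0 < c ∧ ∀ (n : ℕ) (C : Submodule (ZMod 2) (Fin n → ZMod 2)),
      statDist (unifQuot C) (periodize C (fber n p)) ≤
        (∑ r ∈ Finset.Icc ⌈(1 - ε) * n * p⌉₊ ⌊(1 + ε) * n * p⌋₊,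
          statDist (unifQuot C) (periodize C (funif n r))) +
        (2 : ℝ) ^ (-(c * n)) := by
  lift p to unitInterval using Set.Ioo_subset_Icc_self hp
  obtain ⟨hp0, hp1⟩ := hp
  obtain ⟨c, hc, hrate⟩ := exists_min_exp_one_sub_pow_le_two_rpow
    (a := 2 * (ε * p) ^ 2) (q := min (p : ℝ) (1 - p)) (by positivity)
    (lt_min hp0 (sub_pos.2 hp1)) ((min_le_left _ _).trans hp1.le)
  refine ⟨c, hc, fun n C => ?_⟩
  set J := Finset.Icc ⌈(1 - ε) * n * p⌉₊ ⌊(1 + ε) * n * p⌋₊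
  have hwindow := statDist_fber_le_sum_add_sum_sdiff C p J
  have htail := sum_binomial_real_sdiff_Icc_ceil_floor_le n p hε.le
  have hsmall := statDist_fber_le_one_sub_min_pow C p
  have hJ : 0 ≤ ∑ r ∈ J, statDist (unifQuot C) (periodize C (funif n r)) :=
    Finset.sum_nonneg fun _ _ => statDist_nonneg _ _
  rcases min_le_iff.1 (hrate n) with h | h <;> linarith

/-- For every `p ∈ (0,1/2]` and `ε > 0` there is a constant `c > 0` such that for every
`n ≥ 1` and every linear code `𝒞 ⊆ 𝔽₂ⁿ`,
`Δ(u, f_ber,p^𝒞) ≤ Σ_{(1−ε)np ≤ r ≤ (1+ε)np} Δ(u, f_unif,r^𝒞) + 2^{−cn}`. -/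
theorem bernoulli_vs_unif_smoothing (p : ℝ) (hp : p ∈ Set.Ioc (0 : ℝ) (1 / 2))
    (ε : ℝ) (hε : 0 < ε) :
    ∃ c : ℝ, 0 < c ∧ ∀ n : ℕ, 1 ≤ n → ∀ C : Submodule (ZMod 2) (Fin n → ZMod 2),
      statDist (unifQuot C) (periodize C (fber n p)) ≤
        (∑ r ∈ Finset.Icc ⌈(1 - ε) * n * p⌉₊ ⌊(1 + ε) * n * p⌋₊,
          statDist (unifQuot C) (periodize C (funif n r))) +
        (2 : ℝ) ^ (-(c * n)) := by
  obtain ⟨c, hc, h⟩ :=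
    bernoulli_vs_unif_smoothing_general ⟨hp.1, hp.2.trans_lt one_half_lt_one⟩ hε
  exact ⟨c, hc, fun n _ C => h n C⟩
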